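/- If the universal player has a winning strategy for the quantified 3-SAT formula Φ = ∃x₁∀y₁⋯∃xₙ∀yₙ φ, i.e., there exists f : {0,1}* → {0,1} such that φ evaluates to false under every assignment s of x₁, y₁, …, xₙ, yₙ with s(y_i) = f(s(x₁), …, s(x_i)) for all i = 1, …, n, then the CSTN Γ_Φ is not dynamically controllable. -/

import Mathlib

/-!
Against a dynamic viable strategy, the environment keeps every `c i ⁰`, `c i ¹` true and answers
`y i` according to `f`, so that only the values of the `x i` remain to be chosen (`advScen`). They
are chosen one after the other so as to keep the invariant `B_k ≤ A_k + k` (with `k` counted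
from `0`).

If the invariant holds at `k`, then `D_k ≤ B_k + 1 ≤ A_k + k + 1`. Had neither `C_k⁰` nor `C_k¹`
been observed before `D_k`, the strategy would execute `D_k` at the same time when both
`c k ⁰` and `c k ¹` are false, violating `D_k ≥ A_k + n + 2`; hence some `C_k^b` precedes `D_k`
(`exists_early_C`). Now `x k` is set to `b`. This alters only propositions observed at `X_k` or
later, when `A_k` and `C_k^b` are already executed, so these two keep their times, and
`B_{k+1} ≤ C_k^b + n + 4 < A_k + k + 1 + n + 4 ≤ A_{k+1} + k + 1` (`invariant_step`).

For `k = n` the invariant contradicts the constraint `B_n ≥ A_n + n + 1` of a clause falsified by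
the resulting assignment. All comparisons between two scenarios go through `CSTN.Dynamic.agree`: a
dynamic strategy cannot react to a proposition before it is observed.
-/

open Classical

/-- A label over propositional variables `P`: a conjunction of positive or negative
literals over distinct variables, encoded as a partial assignment (`none` means the
variable does not occur in the label). The empty label is `fun _ => none`. -/
abbrev CLabel (P : Type) := P → Option Bool

/-- The empty label `λ`. -/
def emptyLabel (P : Type) : CLabel P := fun _ => none

/-- A scenario `s` satisfies a label `ℓ` (written `s ⊨ ℓ`). -/
def sats {P : Type} (s : P → Bool) (ℓ : CLabel P) : Prop :=
  ∀ p b, ℓ p = some b → s p = b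

/-- A Conditional Simple Temporal Network over tasks `T` and propositional
variables `P`.  A labeled constraint `(X, Y, δ, ℓ)` represents `(Y - X ≤ δ, ℓ)`. -/
structure CSTN (T P : Type) where
  /-- The labeled constraints. -/
  C : Set (T × T × ℝ × CLabel P)
  Cfin : C.Finite
  /-- The label of each task. -/
  L : T → CLabel P
  /-- The observation tasks. -/
  OT : Set T
  /-- The observation task of each propositional variable. -/
  obs : P → T
  obs_mem : ∀ p, obs p ∈ OT
  obs_inj : Function.Injective obs
  obs_surj : ∀ X ∈ OT, ∃ p, obs p = X
  /-- Restriction WD1. -/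
  wd1 : ∀ c ∈ C, ∀ s : P → Bool, sats s c.2.2.2 → sats s (L c.1) ∧ sats s (L c.2.1)

namespace CSTN

variable {T P : Type} (Γ : CSTN T P)

/-- The tasks `𝒯_s` executed in scenario `s` (the tasks of the projection `Γ_s`).
An execution strategy is encoded as a total function `σ : (P → Bool) → T → ℝ`;
the values `σ s X` for `X ∉ 𝒯_s` are irrelevant. -/
def Tasks (s : P → Bool) : Set T := {X | sats s (Γ.L X)}

/-- The history `Hist(t, s, σ)`: the partial scenario recording the values in `s` of
the propositional variables observed strictly before time `t`. -/
noncomputable def Hist (σ : (P → Bool) → T → ℝ) (t : ℝ) (s : P → Bool) : P → Option Bool :=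
  fun p => if Γ.obs p ∈ Γ.Tasks s ∧ σ s (Γ.obs p) < t then some (s p) else none

/-- The execution strategy `σ` is dynamic. -/
def Dynamic (σ : (P → Bool) → T → ℝ) : Prop :=
  ∀ s s' : P → Bool, ∀ X ∈ Γ.Tasks s,
    Γ.Hist σ (σ s X) s = Γ.Hist σ (σ s X) s' → X ∈ Γ.Tasks s' ∧ σ s' X = σ s X

/-- The execution strategy `σ` is viable: in every scenario `s`, the schedule `σ s`
satisfies all constraints of the projection `Γ_s`. -/
def Viable (σ : (P → Bool) → T → ℝ) : Prop :=
  ∀ s : P → Bool, ∀ c ∈ Γ.C, sats s c.2.2.2 → σ s c.2.1 - σ s c.1 ≤ c.2.2.1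

/-- `Γ` is dynamically controllable: it admits a dynamic and viable execution strategy. -/
def DynamicallyControllable : Prop :=
  ∃ σ : (P → Bool) → T → ℝ, Γ.Dynamic σ ∧ Γ.Viable σ

end CSTN

/-! ### The reduction from Q3SAT: the CSTN `Γ_Φ` -/

/-- A literal of the Q3SAT formula: a variable `x i` (`Sum.inl i`) or `y i`
(`Sum.inr i`) together with its sign (`true` = positive occurrence). -/
abbrev QLit (n : ℕ) := (Fin n ⊕ Fin n) × Bool

/-- A clause `l₁ ∨ l₂ ∨ l₃` of the 3CNF `φ`. -/
abbrev QClause (n : ℕ) := QLit n × QLit n × QLit n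

/-- The propositional variables `x i`, `y i`, `c i ⁰`, `c i ¹` of `Γ_Φ` (0-based). -/
inductive PhiVar (n : ℕ) where
  | x (i : Fin n) | y (i : Fin n) | c0 (i : Fin n) | c1 (i : Fin n)
deriving DecidableEq

/-- The tasks of `Γ_Φ` (0-based: paper's `A_i`, `i = 1, …, n+1`, is `A ⟨i-1⟩`). -/
inductive PhiTask (n : ℕ) where
  | A (i : Fin (n + 1)) | B (i : Fin (n + 1))
  | C0 (i : Fin n) | C1 (i : Fin n) | D (i : Fin n)
  | X (i : Fin n) | Y (i : Fin n)
deriving DecidableEq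

/-- The propositional variable on which a literal occurs. -/
def litVar {n : ℕ} (l : QLit n) : PhiVar n :=
  match l.1 with
  | .inl i => .x i
  | .inr i => .y i

/-- The literals of a clause occur on pairwise distinct variables
(so that `ℓ_j = ¬l₁ ∧ ¬l₂ ∧ ¬l₃` is a well-formed label). -/
def GoodClause {n : ℕ} (c : QClause n) : Prop :=
  litVar c.1 ≠ litVar c.2.1 ∧ litVar c.1 ≠ litVar c.2.2 ∧ litVar c.2.1 ≠ litVar c.2.2

/-- A literal evaluates to true under an assignment. -/
def evalLit {n : ℕ} (s : PhiVar n → Bool) (l : QLit n) : Prop := s (litVar l) = l.2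

/-- A clause evaluates to true under an assignment. -/
def evalClause {n : ℕ} (s : PhiVar n → Bool) (c : QClause n) : Prop :=
  evalLit s c.1 ∨ evalLit s c.2.1 ∨ evalLit s c.2.2

/-- The 3CNF `φ` evaluates to true under an assignment. -/
def evalCNF {n m : ℕ} (cl : Fin m → QClause n) (s : PhiVar n → Bool) : Prop :=
  ∀ j, evalClause s (cl j)

/-- The label consisting of the single literal forcing `p` to `b`. -/
def singleLabel {n : ℕ} (p : PhiVar n) (b : Bool) : CLabel (PhiVar n) :=
  fun q => if q = p then some b else none

/-- The label conjunction of two literals. -/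
def pairLabel {n : ℕ} (p : PhiVar n) (bp : Bool) (q : PhiVar n) (bq : Bool) :
    CLabel (PhiVar n) :=
  fun r => if r = p then some bp else if r = q then some bq else none

/-- The label `ℓ_j := ¬l_{j,1} ∧ ¬l_{j,2} ∧ ¬l_{j,3}`, the negation of the clause. -/
def clauseLabel {n : ℕ} (c : QClause n) : CLabel (PhiVar n) :=
  fun q =>
    if q = litVar c.1 then some (!c.1.2)
    else if q = litVar c.2.1 then some (!c.2.1.2)
    else if q = litVar c.2.2 then some (!c.2.2.2)
    else none

/-- `𝒪(x i) = X i`, `𝒪(y i) = Y i`, `𝒪(c i ⁰) = C i ⁰`, `𝒪(c i ¹) = C i ¹`. -/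
def phiObs (n : ℕ) : PhiVar n → PhiTask n
  | .x i => .X i
  | .y i => .Y i
  | .c0 i => .C0 i
  | .c1 i => .C1 i

abbrev PhiCon (n : ℕ) := PhiTask n × PhiTask n × ℝ × CLabel (PhiVar n)

/-- The seven constraints of the `i`-th gadget (as `(X, Y, δ, ℓ)` meaning `Y - X ≤ δ`):
`(D_i ≤ B_i + 1, c_i⁰ ∧ c_i¹)`, `(D_i ≥ A_i + (n+2), ¬c_i⁰ ∧ ¬c_i¹)`,
`(X_i ≥ A_i + (n+2), λ)`, `(Y_i ≥ X_i + 1, λ)`, `(A_{i+1} ≥ Y_i + 1, λ)`,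
`(B_{i+1} ≤ C_i⁰ + (n+4), ¬x_i)`, `(B_{i+1} ≤ C_i¹ + (n+4), x_i)`. -/
def gadget (n : ℕ) (i : Fin n) : Set (PhiCon n) :=
  {(.B i.castSucc, .D i, 1, pairLabel (.c0 i) true (.c1 i) true),
   (.D i, .A i.castSucc, -((n : ℝ) + 2), pairLabel (.c0 i) false (.c1 i) false),
   (.X i, .A i.castSucc, -((n : ℝ) + 2), emptyLabel _),
   (.Y i, .X i, -1, emptyLabel _),
   (.A i.succ, .Y i, -1, emptyLabel _),
   (.C0 i, .B i.succ, (n : ℝ) + 4, singleLabel (.x i) false),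
   (.C1 i, .B i.succ, (n : ℝ) + 4, singleLabel (.x i) true)}

/-- The constraints of `Γ_Φ`: `(B₁ - A₁ ≤ 0, λ)`, the gadget constraints, and the
clause constraints `(B_{n+1} - A_{n+1} ≥ n+1, ℓ_j)` for `j = 1, …, m`. -/
def PhiC (n m : ℕ) (cl : Fin m → QClause n) : Set (PhiCon n) :=
  insert (.A 0, .B 0, (0 : ℝ), emptyLabel _)
    ((⋃ i : Fin n, gadget n i) ∪
     (⋃ j : Fin m,
       {(.B (Fin.last n), .A (Fin.last n), -((n : ℝ) + 1), clauseLabel (cl j))}))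

/-- The CSTN `Γ_Φ` associated to the Q3SAT formula
`Φ = ∃x₁∀y₁ ⋯ ∃xₙ∀yₙ ⋀_{j=1}^m (l_{j,1} ∨ l_{j,2} ∨ l_{j,3})`. -/
def GammaPhi (n m : ℕ) (cl : Fin m → QClause n) : CSTN (PhiTask n) (PhiVar n) where
  C := PhiC n m cl
  Cfin := by
    apply Set.Finite.insert
    apply Set.Finite.union
    · exact Set.finite_iUnion fun i =>
        (((((((Set.finite_singleton _).insert _).insert _).insert _).insert
          _).insert _).insert _)
    · exact Set.finite_iUnion fun j => Set.finite_singleton _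
  L := fun _ => emptyLabel _
  OT := Set.range (phiObs n)
  obs := phiObs n
  obs_mem := fun p => ⟨p, rfl⟩
  obs_inj := by
    intro p q hpq
    cases p <;> cases q <;> simp_all [phiObs]
  obs_surj := fun _ hX => hX
  wd1 := by
    intro c _ s _
    constructor <;> · intro p b hb; simp [emptyLabel] at hb

/-! ### Consequences of dynamicity -/

/-- A dynamic strategy behaves identically up to and including time `t` in two scenarios that
differ only on propositions which the first of them observes at time `t` or later. -/
theorem CSTN.Dynamic.agree {T P : Type} [Finite P] {Γ : CSTN T P} {σ : (P → Bool) → T → ℝ}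
    (hT : ∀ s Z, Z ∈ Γ.Tasks s) (hσ : Γ.Dynamic σ) {s s' : P → Bool} {t : ℝ}
    (h : ∀ p, s p ≠ s' p → t ≤ σ s (Γ.obs p)) {Z : T} (hZ : σ s Z ≤ t ∨ σ s' Z ≤ t) :
    σ s' Z = σ s Z := by
  -- Tasks executed by time `u` agree as soon as all observations made before `u` do.
  have key : ∀ u ≤ t, (∀ q, σ s (Γ.obs q) ≠ σ s' (Γ.obs q) →
      u ≤ min (σ s (Γ.obs q)) (σ s' (Γ.obs q))) →
      ∀ W, min (σ s W) (σ s' W) = u → σ s' W = σ s W := by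
    intro u hu hq W hW
    have hist : Γ.Hist σ u s = Γ.Hist σ u s' := by
      funext q
      simp only [CSTN.Hist, hT, true_and]
      by_cases e : σ s (Γ.obs q) = σ s' (Γ.obs q)
      · rw [← e]
        split_ifs with hlt
        · congr 1
          by_contra hne
          linarith [h q hne]
        · rfl
      · have := hq q e
        rw [le_min_iff] at this
        rw [if_neg (not_lt.2 this.1), if_neg (not_lt.2 this.2)]
    rcases min_choice (σ s W) (σ s' W) with hm | hm
    · have e : σ s W = u := hm ▸ hW
      exact (hσ s s' W (hT _ _) (by rw [e]; exact hist)).2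
    · have e : σ s' W = u := hm ▸ hW
      exact (hσ s' s W (hT _ _) (by rw [e]; exact hist.symm)).2.symm
  -- A time-minimal disagreeing observation before `t` would contradict `key`.
  have obs_agree : ∀ q, σ s (Γ.obs q) ≠ σ s' (Γ.obs q) →
      t ≤ min (σ s (Γ.obs q)) (σ s' (Γ.obs q)) := by
    by_contra! hex
    obtain ⟨p, ⟨hp, hpt⟩, hmin⟩ := Set.exists_min_image
      {q : P | σ s (Γ.obs q) ≠ σ s' (Γ.obs q) ∧ min (σ s (Γ.obs q)) (σ s' (Γ.obs q)) < t}
      (fun q => min (σ s (Γ.obs q)) (σ s' (Γ.obs q))) (Set.toFinite _) hex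
    refine hp (key _ hpt.le (fun q hq => ?_) (Γ.obs p) rfl).symm
    by_contra! hlt
    exact absurd (hmin q ⟨hq, hlt.trans hpt⟩) (not_le.2 hlt)
  have hle : min (σ s Z) (σ s' Z) ≤ t := min_le_iff.2 hZ
  exact key _ hle (fun q hq => hle.trans (obs_agree q hq)) Z rfl

instance PhiVar.instFinite (n : ℕ) : Finite (PhiVar n) := by
  refine Finite.of_injective (β := Fin 4 × Fin n)
    (fun p => match p with | .x i => (0, i) | .y i => (1, i) | .c0 i => (2, i) | .c1 i => (3, i)) ?_
  intro p q h
  cases p <;> cases q <;> simp_all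

/-! ### The environment against a strategy for `Γ_Φ` -/

section Game

variable {n m : ℕ} {cl : Fin m → QClause n} {σ : (PhiVar n → Bool) → PhiTask n → ℝ}

theorem gammaPhi_mem_tasks (s : PhiVar n → Bool) (Z : PhiTask n) :
    Z ∈ (GammaPhi n m cl).Tasks s := by
  intro p b hb
  simp [GammaPhi, emptyLabel] at hb

theorem gammaPhi_agree (hσ : (GammaPhi n m cl).Dynamic σ) {s s' : PhiVar n → Bool} {t : ℝ}
    (h : ∀ p, s p ≠ s' p → t ≤ σ s (phiObs n p)) {Z : PhiTask n}
    (hZ : σ s Z ≤ t ∨ σ s' Z ≤ t) : σ s' Z = σ s Z :=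
  CSTN.Dynamic.agree gammaPhi_mem_tasks hσ h hZ

theorem sats_emptyLabel (s : PhiVar n → Bool) : sats s (emptyLabel _) := by
  intro p b hb
  simp [emptyLabel] at hb

theorem sats_singleLabel {s : PhiVar n → Bool} {p : PhiVar n} {b : Bool} (h : s p = b) :
    sats s (singleLabel p b) := by
  intro q c hq
  unfold singleLabel at hq
  split_ifs at hq with e
  rw [e, h, Option.some.inj hq]

theorem sats_pairLabel {s : PhiVar n → Bool} {p q : PhiVar n} {b c : Bool}
    (hp : s p = b) (hq : s q = c) : sats s (pairLabel p b q c) := by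
  intro r d hr
  unfold pairLabel at hr
  split_ifs at hr with e e
  · rw [e, hp, Option.some.inj hr]
  · rw [e, hq, Option.some.inj hr]

theorem sats_clauseLabel {s : PhiVar n → Bool} {c : QClause n} (h : ¬ evalClause s c) :
    sats s (clauseLabel c) := by
  simp only [evalClause, evalLit, not_or, ← Bool.eq_not_iff] at h
  intro r d hr
  unfold clauseLabel at hr
  split_ifs at hr with e e e
  · rw [e, h.1, Option.some.inj hr]
  · rw [e, h.2.1, Option.some.inj hr]
  · rw [e, h.2.2, Option.some.inj hr]

theorem viable_gadget (hv : (GammaPhi n m cl).Viable σ) (s : PhiVar n → Bool) (i : Fin n)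
    {c : PhiCon n} (hc : c ∈ gadget n i) (hs : sats s c.2.2.2) :
    σ s c.2.1 - σ s c.1 ≤ c.2.2.1 :=
  hv s c (Or.inr (Or.inl (Set.mem_iUnion.2 ⟨i, hc⟩))) hs

theorem D_le (hv : (GammaPhi n m cl).Viable σ) (s : PhiVar n → Bool) (i : Fin n)
    (h0 : s (.c0 i) = true) (h1 : s (.c1 i) = true) :
    σ s (.D i) ≤ σ s (.B i.castSucc) + 1 := by
  have := viable_gadget hv s i
    (c := (.B i.castSucc, .D i, 1, pairLabel (.c0 i) true (.c1 i) true))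
    (by simp [gadget]) (sats_pairLabel h0 h1)
  dsimp only at this
  linarith

theorem le_D (hv : (GammaPhi n m cl).Viable σ) (s : PhiVar n → Bool) (i : Fin n)
    (h0 : s (.c0 i) = false) (h1 : s (.c1 i) = false) :
    σ s (.A i.castSucc) + (n + 2) ≤ σ s (.D i) := by
  have := viable_gadget hv s i
    (c := (.D i, .A i.castSucc, -((n : ℝ) + 2), pairLabel (.c0 i) false (.c1 i) false))
    (by simp [gadget]) (sats_pairLabel h0 h1)
  dsimp only at this
  linarith

theorem A_le_X (hv : (GammaPhi n m cl).Viable σ) (s : PhiVar n → Bool) (i : Fin n) :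
    σ s (.A i.castSucc) + (n + 2) ≤ σ s (.X i) := by
  have := viable_gadget hv s i
    (c := (.X i, .A i.castSucc, -((n : ℝ) + 2), emptyLabel _))
    (by simp [gadget]) (sats_emptyLabel s)
  dsimp only at this
  linarith

theorem X_le_Y (hv : (GammaPhi n m cl).Viable σ) (s : PhiVar n → Bool) (i : Fin n) :
    σ s (.X i) + 1 ≤ σ s (.Y i) := by
  have := viable_gadget hv s i (c := (.Y i, .X i, -1, emptyLabel _))
    (by simp [gadget]) (sats_emptyLabel s)
  dsimp only at this
  linarith

theorem Y_le_A (hv : (GammaPhi n m cl).Viable σ) (s : PhiVar n → Bool) (i : Fin n) :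
    σ s (.Y i) + 1 ≤ σ s (.A i.succ) := by
  have := viable_gadget hv s i (c := (.A i.succ, .Y i, -1, emptyLabel _))
    (by simp [gadget]) (sats_emptyLabel s)
  dsimp only at this
  linarith

/-- The task `C i ^ b`. -/
def taskC (i : Fin n) (b : Bool) : PhiTask n := if b then .C1 i else .C0 i

theorem B_succ_le (hv : (GammaPhi n m cl).Viable σ) (s : PhiVar n → Bool) (i : Fin n) :
    σ s (.B i.succ) ≤ σ s (taskC i (s (.x i))) + (n + 4) := by
  cases hx : s (.x i)
  · have := viable_gadget hv s i
      (c := (.C0 i, .B i.succ, (n : ℝ) + 4, singleLabel (.x i) false))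
      (by simp [gadget]) (sats_singleLabel hx)
    simp only [taskC, Bool.false_eq_true, if_false] at this ⊢
    linarith
  · have := viable_gadget hv s i
      (c := (.C1 i, .B i.succ, (n : ℝ) + 4, singleLabel (.x i) true))
      (by simp [gadget]) (sats_singleLabel hx)
    simp only [taskC, if_true] at this ⊢
    linarith

theorem X_mono (hv : (GammaPhi n m cl).Viable σ) (s : PhiVar n → Bool) {i j : Fin n}
    (hij : i ≤ j) : σ s (.X i) ≤ σ s (.X j) := by
  rcases hij.eq_or_lt with rfl | hlt
  · exact le_rfl
  have hn : (0 : ℝ) ≤ n := Nat.cast_nonneg n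
  have hA : Monotone fun k : Fin (n + 1) => σ s (.A k) := Fin.monotone_iff_le_succ.2 fun k => by
    linarith [A_le_X hv s k, X_le_Y hv s k, Y_le_A hv s k]
  have h : σ s (.A i.succ) ≤ σ s (.A j.castSucc) := hA (by
    rw [Fin.le_def]
    simpa using hlt)
  linarith [X_le_Y hv s i, Y_le_A hv s i, A_le_X hv s j]

/-- If `D i` has to be executed early, it must be preceded by one of the observations `C i ⁰`,
`C i ¹`: otherwise the strategy could not tell whether both `c i ⁰` and `c i ¹` are false. -/
theorem exists_early_C (hσ : (GammaPhi n m cl).Dynamic σ) (hv : (GammaPhi n m cl).Viable σ)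
    (s : PhiVar n → Bool) (i : Fin n)
    (hD : σ s (.D i) < σ s (.A i.castSucc) + (n + 2)) :
    ∃ b, σ s (taskC i b) < σ s (.D i) := by
  by_contra! hC
  have hC0 : σ s (.D i) ≤ σ s (.C0 i) := by simpa [taskC] using hC false
  have hC1 : σ s (.D i) ≤ σ s (.C1 i) := by simpa [taskC] using hC true
  set s' : PhiVar n → Bool := fun p => if p = .c0 i ∨ p = .c1 i then false else s p with hs'
  have hdiff : ∀ p, s p ≠ s' p → σ s (.D i) ≤ σ s (phiObs n p) := by
    intro p hp
    by_cases hc : p = .c0 i ∨ p = .c1 i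
    · rcases hc with rfl | rfl
      · exact hC0
      · exact hC1
    · exact absurd (if_neg hc).symm hp
  have hD' : σ s' (.D i) = σ s (.D i) := gammaPhi_agree hσ hdiff (Or.inl le_rfl)
  have hle := le_D hv s' i (by simp [hs']) (by simp [hs'])
  have hn : (0 : ℝ) ≤ n := Nat.cast_nonneg n
  -- `A i` precedes `D i` in `s'`, so it is executed at the same time in `s`.
  have hA : σ s' (.A i.castSucc) = σ s (.A i.castSucc) :=
    gammaPhi_agree hσ hdiff (Or.inr (by linarith))
  linarith

/-- The scenario played by the environment once the values `x` of the existential variables are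
fixed: the `y i` follow `f`, and all `c i ⁰`, `c i ¹` are true. -/
def advScen (f : List Bool → Bool) (x : Fin n → Bool) : PhiVar n → Bool
  | .x i => x i
  | .y i => f (List.ofFn fun k : Fin (i.val + 1) =>
      x ⟨k.val, by have hk := k.isLt; have hi := i.isLt; omega⟩)
  | .c0 _ => true
  | .c1 _ => true

/-- The round of the `i`-th gadget: `x i` is reset to the superscript of an observation `C i ^ b`
executed early, which forces `B (i+1)` to be early as well. -/
theorem invariant_step (hσ : (GammaPhi n m cl).Dynamic σ) (hv : (GammaPhi n m cl).Viable σ)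
    (f : List Bool → Bool) (i : Fin n) {x : Fin n → Bool}
    (h : σ (advScen f x) (.B i.castSucc) ≤ σ (advScen f x) (.A i.castSucc) + (i : ℕ)) :
    ∃ x' : Fin n → Bool,
      σ (advScen f x') (.B i.succ) ≤ σ (advScen f x') (.A i.succ) + ((i : ℕ) + 1) := by
  have hin : ((i : ℕ) : ℝ) + 1 ≤ n := by exact_mod_cast i.isLt
  have hD := D_le hv (advScen f x) i rfl rfl
  obtain ⟨b, hb⟩ := exists_early_C hσ hv (advScen f x) i (by linarith)
  have hAX := A_le_X hv (advScen f x) i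
  have hdiff : ∀ p, advScen f x p ≠ advScen f (Function.update x i b) p →
      σ (advScen f x) (.X i) ≤ σ (advScen f x) (phiObs n p) := by
    intro p hp
    cases p with
    | x j =>
      by_cases hj : j = i
      · subst hj; exact le_rfl
      · simp [advScen, hj] at hp
    | y j =>
      rcases le_or_gt i j with hij | hij
      · have h1 := X_mono hv (advScen f x) hij
        have h2 := X_le_Y hv (advScen f x) j
        simp only [phiObs]
        linarith
      · -- `f` is applied to the values of `x` at indices up to `j < i`, which are unchanged.
        refine absurd ?_ hp
        simp only [advScen]
        congr 2
        funext k
        rw [Function.update_of_ne]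
        intro e
        have := congrArg Fin.val e
        have hk := k.isLt
        rw [Fin.lt_def] at hij
        simp only at this
        omega
    | c0 j => exact absurd rfl hp
    | c1 j => exact absurd rfl hp
  have hA := gammaPhi_agree hσ hdiff (Z := .A i.castSucc) (Or.inl (by linarith))
  have hC := gammaPhi_agree hσ hdiff (Z := taskC i b) (Or.inl (by linarith))
  refine ⟨Function.update x i b, ?_⟩
  have hB := B_succ_le hv (advScen f (Function.update x i b)) i
  have hx : advScen f (Function.update x i b) (.x i) = b := by simp [advScen]
  rw [hx] at hB
  linarith [A_le_X hv (advScen f (Function.update x i b)) i,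
    X_le_Y hv (advScen f (Function.update x i b)) i,
    Y_le_A hv (advScen f (Function.update x i b)) i]

theorem invariant (hσ : (GammaPhi n m cl).Dynamic σ) (hv : (GammaPhi n m cl).Viable σ)
    (f : List Bool → Bool) (k : Fin (n + 1)) :
    ∃ x : Fin n → Bool, σ (advScen f x) (.B k) ≤ σ (advScen f x) (.A k) + (k : ℕ) := by
  induction k using Fin.induction with
  | zero =>
    refine ⟨fun _ => true, ?_⟩
    have := hv (advScen f fun _ => true) (.A 0, .B 0, (0 : ℝ), emptyLabel _) (Or.inl rfl)
      (sats_emptyLabel _)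
    dsimp only at this
    simp only [Fin.val_zero, Nat.cast_zero]
    linarith
  | succ i ih =>
    obtain ⟨x, hx⟩ := ih
    simpa using invariant_step hσ hv f i hx

end Game

/-- **Lemma 7.** If the universal player has a winning strategy
`f : {0,1}* → {0,1}` for `Φ` (i.e. `φ` is false under every assignment `s` with
`s(y_i) = f(s(x_1), …, s(x_i))` for all `i`), then `Γ_Φ` is not dynamically
controllable. -/
theorem gammaPhi_not_dc_of_universal_win (n m : ℕ) (hn : 1 ≤ n) (hm : 1 ≤ m)
    (cl : Fin m → QClause n) (hgood : ∀ j, GoodClause (cl j))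
    (f : List Bool → Bool)
    (hf : ∀ s : PhiVar n → Bool,
      (∀ i : Fin n, s (.y i) =
        f (List.ofFn fun k : Fin (i.val + 1) =>
            s (.x ⟨k.val, by have hk := k.isLt; have hi := i.isLt; omega⟩))) →
      ¬ evalCNF cl s) :
    ¬ (GammaPhi n m cl).DynamicallyControllable := by
  rintro ⟨σ, hσ, hv⟩
  obtain ⟨x, hx⟩ := invariant hσ hv f (Fin.last n)
  have hfalse := hf (advScen f x) fun _ => rfl
  simp only [evalCNF, not_forall] at hfalse
  obtain ⟨j, hj⟩ := hfalse
  have := hv (advScen f x)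
    (.B (Fin.last n), .A (Fin.last n), -((n : ℝ) + 1), clauseLabel (cl j))
    (Or.inr (Or.inr (Set.mem_iUnion.2 ⟨j, rfl⟩))) (sats_clauseLabel hj)
  dsimp only at this
  simp only [Fin.val_last] at hx
  linarith
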